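/- Let L be a bounded chain. Every lattice polynomial function f : L^n → L with n = 1 or n = 2 is a weighted disjunction or has chain form. -/

import Mathlib

/-- Lattice polynomial functions: the smallest class of functions `L^n → L`
containing the projections and the constant functions and closed under
pointwise joins and meets. -/
inductive IsLatticePolynomial {L : Type*} [Lattice L] {n : ℕ} : ((Fin n → L) → L) → Prop
  | proj (i : Fin n) : IsLatticePolynomial (fun x => x i)
  | const (c : L) : IsLatticePolynomial (fun _ => c)
  | sup {f g : (Fin n → L) → L} : IsLatticePolynomial f → IsLatticePolynomial g →
      IsLatticePolynomial (fun x => f x ⊔ g x)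
  | inf {f g : (Fin n → L) → L} : IsLatticePolynomial f → IsLatticePolynomial g →
      IsLatticePolynomial (fun x => f x ⊓ g x)

/-- `f` is a weighted disjunction:
`f(x) = a_∅ ∨ ⋁_{i ∈ [n]} (a_i ∧ x_i)` for some coefficients. -/
def IsWeightedDisjunction {L : Type*} [Lattice L] {n : ℕ} (f : (Fin n → L) → L) : Prop :=
  ∃ (a₀ : L) (a : Fin n → L),
    ∀ x : Fin n → L,
      f x = Finset.univ.fold (fun u v : L => u ⊔ v) a₀ (fun i => a i ⊓ x i)

/-- `f` has chain form:
`f(x) = a_∅ ∨ ⋁_{i ∈ [n]} (a_i ∧ x_i) ∨ ⋁_{1 ≤ ℓ ≤ r} (a_{S_ℓ} ∧ ⋀_{i ∈ S_ℓ} x_i)`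
for a chain of subsets `S_1 ⊆ ⋯ ⊆ S_r ⊆ [n]` with `r ≥ 1` and `|S_1| ≥ 2`,
where the coefficients satisfy `a_I ≤ a_J` whenever `I ⊆ J` among the indexed
sets, and for every `i ∉ S_1` there is `j ∈ S_1` with `a_i ≤ a_j`. -/
def HasChainForm {L : Type*} [Lattice L] {n : ℕ} (f : (Fin n → L) → L) : Prop :=
  ∃ (r : ℕ) (hr : 0 < r) (S : Fin r → Finset (Fin n)) (a₀ : L) (a : Fin n → L)
    (b : Fin r → L) (hne : ∀ ℓ : Fin r, (S ℓ).Nonempty),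
    (∀ ℓ m : Fin r, ℓ ≤ m → S ℓ ⊆ S m) ∧
    2 ≤ (S ⟨0, hr⟩).card ∧
    (∀ i, a₀ ≤ a i) ∧
    (∀ ℓ, a₀ ≤ b ℓ) ∧
    (∀ i ℓ, i ∈ S ℓ → a i ≤ b ℓ) ∧
    (∀ ℓ m, S ℓ ⊆ S m → b ℓ ≤ b m) ∧
    (∀ i, i ∉ S ⟨0, hr⟩ → ∃ j ∈ S ⟨0, hr⟩, a i ≤ a j) ∧
    ∀ x : Fin n → L,
      f x = Finset.univ.fold (fun u v : L => u ⊔ v)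
        (Finset.univ.fold (fun u v : L => u ⊔ v) a₀ (fun i => a i ⊓ x i))
        (fun ℓ : Fin r => b ℓ ⊓ (S ℓ).inf' (hne ℓ) (fun i => x i))

/-! A lattice polynomial function is affine in each coordinate: for the other coordinates fixed it
is `t ↦ p ⊔ q ⊓ t`, where `p ≤ q` are its values at `t = ⊥` and `t = ⊤`. Expanding both coordinates
of a binary function leaves only its values at the four vertices of the cube, and monotonicity
orders these values as the chain form with `r = 1` and `S₁ = [2]` requires. -/

open Function

theorem sup_inf_inf_sup_inf_of_le {L : Type*} [DistribLattice L] {p q p' q' : L}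
    (h : p ≤ q) (h' : p' ≤ q') (t : L) :
    (p ⊔ q ⊓ t) ⊓ (p' ⊔ q' ⊓ t) = p ⊓ p' ⊔ (q ⊓ q') ⊓ t :=
  calc (p ⊔ q ⊓ t) ⊓ (p' ⊔ q' ⊓ t)
      = (q ⊓ (p ⊔ t)) ⊓ (q' ⊓ (p' ⊔ t)) := by
        rw [sup_inf_left, sup_inf_left, sup_eq_right.2 h, sup_eq_right.2 h']
    _ = (q ⊓ q') ⊓ (p ⊓ p' ⊔ t) := by rw [inf_inf_inf_comm, sup_inf_right]
    _ = p ⊓ p' ⊔ (q ⊓ q') ⊓ t := by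
        rw [sup_inf_left, sup_eq_right.2 (inf_le_inf h h')]

theorem fold_sup_univ_fin_two {L : Type*} [SemilatticeSup L] (p : L) (g : Fin 2 → L) :
    Finset.univ.fold (fun u v : L => u ⊔ v) p g = p ⊔ g 0 ⊔ g 1 := by
  have univ_eq : (Finset.univ : Finset (Fin 2)) = {0, 1} := rfl
  rw [univ_eq, Finset.fold_insert (by decide), Finset.fold_singleton]
  ac_rfl

theorem inf'_univ_fin_two {L : Type*} [SemilatticeInf L] (g : Fin 2 → L) :
    Finset.univ.inf' Finset.univ_nonempty g = g 0 ⊓ g 1 :=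
  Finset.inf'_insert (b := 0) (Finset.singleton_nonempty 1) g

theorem IsWeightedDisjunction.of_arity_zero {L : Type*} [Lattice L] (f : (Fin 0 → L) → L) :
    IsWeightedDisjunction f :=
  ⟨f ![], ![], fun x => congrArg f (Subsingleton.elim x ![])⟩

namespace IsLatticePolynomial

theorem monotone {L : Type*} [Lattice L] {n : ℕ} {f : (Fin n → L) → L}
    (hf : IsLatticePolynomial f) : Monotone f := by
  induction hf with
  | proj i => exact monotone_eval i
  | const c => exact monotone_const
  | sup _ _ ihf ihg => exact ihf.sup ihg
  | inf _ _ ihf ihg => exact ihf.inf ihg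

variable {L : Type*} [DistribLattice L] [BoundedOrder L] {n : ℕ}

theorem eq_sup_inf_update {f : (Fin n → L) → L} (hf : IsLatticePolynomial f) (i : Fin n)
    (x : Fin n → L) : f x = f (update x i ⊥) ⊔ f (update x i ⊤) ⊓ x i := by
  have update_bot_le_update_top : update x i ⊥ ≤ update x i ⊤ :=
    update_le_update_iff'.2 bot_le
  induction hf with
  | proj j =>
    obtain rfl | hij := eq_or_ne j i
    · simp only [update_self, bot_sup_eq, top_inf_eq]
    · simp only [update_of_ne hij, sup_inf_self]
  | const c => exact sup_inf_self.symm
  | sup _ _ ihf ihg =>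
    rw [inf_sup_right, sup_sup_sup_comm, ← ihf, ← ihg]
  | inf hf hg ihf ihg =>
    rw [← sup_inf_inf_sup_inf_of_le (hf.monotone update_bot_le_update_top)
      (hg.monotone update_bot_le_update_top), ← ihf, ← ihg]

theorem eq_of_arity_one {f : (Fin 1 → L) → L} (hf : IsLatticePolynomial f) (x : Fin 1 → L) :
    f x = f ⊥ ⊔ f ⊤ ⊓ x 0 := by
  have update_eq (c : L) : update x 0 c = fun _ => c :=
    funext fun i => by rw [Subsingleton.elim i 0, update_self]
  rw [hf.eq_sup_inf_update 0 x, update_eq, update_eq]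
  rfl

theorem eq_of_arity_two {f : (Fin 2 → L) → L} (hf : IsLatticePolynomial f) (x : Fin 2 → L) :
    f x = f ⊥ ⊔ f (update ⊥ 0 ⊤) ⊓ x 0 ⊔ f (update ⊥ 1 ⊤) ⊓ x 1 ⊔ f ⊤ ⊓ (x 0 ⊓ x 1) := by
  have update_update (s t : L) : update (update x 0 s) 1 t = ![s, t] := by
    ext i; fin_cases i <;> rfl
  have vertex_bot : (![⊥, ⊥] : Fin 2 → L) = ⊥ := by ext i; fin_cases i <;> rfl
  have vertex_zero : (![⊤, ⊥] : Fin 2 → L) = update ⊥ 0 ⊤ := by ext i; fin_cases i <;> rfl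
  have vertex_one : (![⊥, ⊤] : Fin 2 → L) = update ⊥ 1 ⊤ := by ext i; fin_cases i <;> rfl
  have vertex_top : (![⊤, ⊤] : Fin 2 → L) = ⊤ := by ext i; fin_cases i <;> rfl
  have expand_snd (s : L) : f (update x 0 s) = f ![s, ⊥] ⊔ f ![s, ⊤] ⊓ x 1 := by
    rw [hf.eq_sup_inf_update 1, update_update, update_update, update_of_ne one_ne_zero]
  calc f x
      = (f ![⊥, ⊥] ⊔ f ![⊥, ⊤] ⊓ x 1) ⊔ (f ![⊤, ⊥] ⊔ f ![⊤, ⊤] ⊓ x 1) ⊓ x 0 := by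
        rw [hf.eq_sup_inf_update 0 x, expand_snd, expand_snd]
    _ = f ⊥ ⊔ f (update ⊥ 0 ⊤) ⊓ x 0 ⊔ f (update ⊥ 1 ⊤) ⊓ x 1 ⊔ f ⊤ ⊓ (x 0 ⊓ x 1) := by
        rw [vertex_bot, vertex_zero, vertex_one, vertex_top, inf_sup_right]
        ac_rfl

theorem isWeightedDisjunction_of_arity_one {f : (Fin 1 → L) → L} (hf : IsLatticePolynomial f) :
    IsWeightedDisjunction f :=
  ⟨f ⊥, fun _ => f ⊤, fun x => by
    rw [hf.eq_of_arity_one, Finset.univ_unique, Finset.fold_singleton, sup_comm]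
    rfl⟩

theorem hasChainForm_of_arity_two {f : (Fin 2 → L) → L} (hf : IsLatticePolynomial f) :
    HasChainForm f := by
  refine ⟨1, one_pos, fun _ => Finset.univ, f ⊥, fun i => f (update ⊥ i ⊤), fun _ => f ⊤,
    fun _ => Finset.univ_nonempty, fun _ _ _ => subset_rfl, (Finset.card_fin 2).ge,
    fun _ => hf.monotone bot_le, fun _ => hf.monotone bot_le, fun _ _ _ => hf.monotone le_top,
    fun _ _ _ => le_rfl, fun i hi => absurd (Finset.mem_univ i) hi, fun x => ?_⟩
  rw [hf.eq_of_arity_two, fold_sup_univ_fin_two, Finset.univ_unique (α := Fin 1),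
    Finset.fold_singleton, inf'_univ_fin_two, sup_comm]

end IsLatticePolynomial

theorem weightedDisjunction_or_chainForm_of_arity_le_two_general
    {L : Type*} [DistribLattice L] [BoundedOrder L] {n : ℕ}
    (hn : n ≤ 2) (f : (Fin n → L) → L) (hf : IsLatticePolynomial f) :
    IsWeightedDisjunction f ∨ HasChainForm f := by
  interval_cases n
  · exact .inl (.of_arity_zero f)
  · exact .inl hf.isWeightedDisjunction_of_arity_one
  · exact .inr hf.hasChainForm_of_arity_two

/-- Over a bounded chain, every unary or binary lattice polynomial function is
a weighted disjunction or has chain form. -/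
theorem weightedDisjunction_or_chainForm_of_arity_le_two
    {L : Type*} [LinearOrder L] [BoundedOrder L] {n : ℕ}
    (hn : n = 1 ∨ n = 2) (f : (Fin n → L) → L) (hf : IsLatticePolynomial f) :
    IsWeightedDisjunction f ∨ HasChainForm f :=
  weightedDisjunction_or_chainForm_of_arity_le_two_general (by omega) f hf
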